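/- arXiv:1810.06440 — 2 statements merged into one kernel-verified Lean document; each statement's English description precedes it below -/
import Mathlib

section
/- Let p > 1/2. For sequences f, g : ℤ → ℂ with ‖f‖_p < ∞ and ‖g‖_p < ∞, the convolution f⋆g defined by (f⋆g)_j := ∑_{i∈ℤ} f_i g_{j−i} is well defined (all series converge absolutely) and satisfies ‖f⋆g‖_p ≤ √(4 + 2(2p+1)/(2p−1)) · ‖f‖_p · ‖g‖_p. -/
open scoped BigOperators

/-- `⌈j⌉ := max(|j|,2)` as a real number. -/
noncomputable def jml (j : ℤ) : ℝ := max (|(j : ℝ)|) 2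

/-!
Write `w = ⌈·⌉ ^ (2p)`. Since `⌈·⌉` is subadditive, convexity of `x ↦ x ^ (2p)` gives
`w j ≤ 2 ^ (2p - 1) * (w i + w (j - i))`. Dividing by `w i * w (j - i)` and summing over `i` yields
the kernel bound `w j * ∑ i, 1 / (w i * w (j - i)) ≤ 2 ^ (2p) * ∑ i, 1 / w i`, whose right side is
at most `5 + 4 / (2p - 1)`: the five indices with `|i| ≤ 2` contribute `1` each, and the integral
test bounds the two tails. By Cauchy-Schwarz, `w j * |(f ⋆ g) j| ^ 2` is at most this constant times
the convolution at `j` of the summable sequences `w |f| ^ 2` and `w |g| ^ 2`, and the sum of that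
convolution over `j` is the product of the two sums.
-/

section CauchySchwarz

variable {ι : Type*} {r a b : ι → ℝ}

theorem sum_le_sqrt_tsum_mul_tsum_of_sq_le_mul (ha : ∀ i, 0 ≤ a i) (hb : ∀ i, 0 ≤ b i)
    (hr : ∀ i, r i ^ 2 ≤ a i * b i) (hsa : Summable a) (hsb : Summable b) (t : Finset ι) :
    ∑ i ∈ t, r i ≤ √((∑' i, a i) * ∑' i, b i) := by
  refine Real.le_sqrt_of_sq_le ?_
  calc (∑ i ∈ t, r i) ^ 2 ≤ (∑ i ∈ t, a i) * ∑ i ∈ t, b i :=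
        t.sum_sq_le_sum_mul_sum_of_sq_le_mul (fun i _ ↦ ha i) (fun i _ ↦ hb i) fun i _ ↦ hr i
    _ ≤ (∑' i, a i) * ∑' i, b i :=
        mul_le_mul (hsa.sum_le_tsum t fun i _ ↦ ha i) (hsb.sum_le_tsum t fun i _ ↦ hb i)
          (t.sum_nonneg fun i _ ↦ hb i) (tsum_nonneg ha)

theorem summable_of_sq_le_mul (h₀ : ∀ i, 0 ≤ r i) (ha : ∀ i, 0 ≤ a i) (hb : ∀ i, 0 ≤ b i)
    (hr : ∀ i, r i ^ 2 ≤ a i * b i) (hsa : Summable a) (hsb : Summable b) : Summable r :=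
  summable_of_sum_le h₀ (sum_le_sqrt_tsum_mul_tsum_of_sq_le_mul ha hb hr hsa hsb)

theorem tsum_sq_le_tsum_mul_tsum_of_sq_le_mul (h₀ : ∀ i, 0 ≤ r i) (ha : ∀ i, 0 ≤ a i)
    (hb : ∀ i, 0 ≤ b i) (hr : ∀ i, r i ^ 2 ≤ a i * b i) (hsa : Summable a) (hsb : Summable b) :
    (∑' i, r i) ^ 2 ≤ (∑' i, a i) * ∑' i, b i :=
  (Real.le_sqrt (tsum_nonneg h₀) (mul_nonneg (tsum_nonneg ha) (tsum_nonneg hb))).1 <|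
    Real.tsum_le_of_sum_le h₀ (sum_le_sqrt_tsum_mul_tsum_of_sq_le_mul ha hb hr hsa hsb)

end CauchySchwarz

section Convolution

variable {G R : Type*} [AddGroup G] [NonUnitalNonAssocSemiring R] [TopologicalSpace R]
  [IsTopologicalSemiring R] [T3Space R] {u v : G → R}

theorem hasSum_prod_mul_sub (hu : Summable u) (hv : Summable v)
    (huv : Summable fun x : G × G ↦ u x.1 * v x.2) :
    HasSum (fun x : G × G ↦ u x.2 * v (x.1 - x.2)) ((∑' i, u i) * ∑' i, v i) := by
  rw [hu.tsum_mul_tsum hv huv]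
  let e : G × G ≃ G × G :=
    (Equiv.prodComm G G).trans ((Equiv.refl G).prodShear Equiv.subRight)
  exact e.hasSum_iff.2 huv.hasSum

theorem hasSum_tsum_mul_sub (hu : Summable u) (hv : Summable v)
    (huv : Summable fun x : G × G ↦ u x.1 * v x.2)
    (hfib : ∀ j, Summable fun i ↦ u i * v (j - i)) :
    HasSum (fun j ↦ ∑' i, u i * v (j - i)) ((∑' i, u i) * ∑' i, v i) :=
  (hasSum_prod_mul_sub hu hv huv).prod_fiberwise fun j ↦ (hfib j).hasSum

end Convolution

/-- A weight `w` for which the weighted `ℓ²` space with squared norm `∑ j, w j * ‖f j‖ ^ 2` is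
closed under convolution: `w` is positive, subadditive up to the factor `K`, and `1 / w` is
summable. -/
structure IsConvolutionWeight {G : Type*} [AddGroup G] (w : G → ℝ) (K : ℝ) : Prop where
  pos (j : G) : 0 < w j
  add_le (i j : G) : w (i + j) ≤ K * (w i + w j)
  summable_inv : Summable fun j ↦ (w j)⁻¹

namespace IsConvolutionWeight

variable {G : Type*} [AddGroup G] {w : G → ℝ} {K : ℝ}

theorem inv_mul_inv_nonneg (hw : IsConvolutionWeight w K) (i j : G) :
    0 ≤ (w i)⁻¹ * (w j)⁻¹ :=
  mul_nonneg (inv_pos.2 (hw.pos i)).le (inv_pos.2 (hw.pos j)).le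

theorem mul_inv_mul_inv_sub_le (hw : IsConvolutionWeight w K) (i j : G) :
    w j * ((w i)⁻¹ * (w (j - i))⁻¹) ≤ K * ((w i)⁻¹ + (w (j - i))⁻¹) := by
  have hi := hw.pos i
  have hji := hw.pos (j - i)
  calc w j * ((w i)⁻¹ * (w (j - i))⁻¹)
      ≤ K * (w (j - i) + w i) * ((w i)⁻¹ * (w (j - i))⁻¹) := by
        gcongr
        simpa using hw.add_le (j - i) i
    _ = K * ((w i)⁻¹ + (w (j - i))⁻¹) := by field_simp

theorem hasSum_inv_add_inv_sub (hw : IsConvolutionWeight w K) (j : G) :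
    HasSum (fun i ↦ (w i)⁻¹ + (w (j - i))⁻¹) (2 * ∑' i, (w i)⁻¹) := by
  have h := hw.summable_inv.hasSum
  rw [two_mul]
  exact h.add ((Equiv.subLeft j).hasSum_iff.2 h)

theorem summable_inv_mul_inv_sub (hw : IsConvolutionWeight w K) (j : G) :
    Summable fun i ↦ (w i)⁻¹ * (w (j - i))⁻¹ := by
  have h : Summable fun i ↦ w j * ((w i)⁻¹ * (w (j - i))⁻¹) :=
    .of_nonneg_of_le
      (fun i ↦ mul_nonneg (hw.pos j).le (hw.inv_mul_inv_nonneg i (j - i)))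
      (fun i ↦ hw.mul_inv_mul_inv_sub_le i j) ((hw.hasSum_inv_add_inv_sub j).summable.mul_left K)
  exact (summable_mul_left_iff (hw.pos j).ne').1 h

theorem mul_tsum_inv_mul_inv_sub_le (hw : IsConvolutionWeight w K) (j : G) :
    w j * ∑' i, (w i)⁻¹ * (w (j - i))⁻¹ ≤ 2 * K * ∑' i, (w i)⁻¹ := by
  have hK := (hw.hasSum_inv_add_inv_sub j).mul_left K
  calc w j * ∑' i, (w i)⁻¹ * (w (j - i))⁻¹
      = ∑' i, w j * ((w i)⁻¹ * (w (j - i))⁻¹) := tsum_mul_left.symm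
    _ ≤ ∑' i, K * ((w i)⁻¹ + (w (j - i))⁻¹) :=
        ((hw.summable_inv_mul_inv_sub j).mul_left (w j)).tsum_le_tsum
          (fun i ↦ hw.mul_inv_mul_inv_sub_le i j) hK.summable
    _ = 2 * K * ∑' i, (w i)⁻¹ := by rw [hK.tsum_eq]; ring

section Norm

variable {E F : Type*} [SeminormedAddCommGroup E] [SeminormedAddCommGroup F]
  {f : G → E} {g : G → F}

theorem mul_norm_sq_nonneg (hw : IsConvolutionWeight w K) (f : G → E) (j : G) :
    0 ≤ w j * ‖f j‖ ^ 2 :=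
  mul_nonneg (hw.pos j).le (sq_nonneg _)

theorem summable_prod_mul_norm_sq (hw : IsConvolutionWeight w K)
    (hf : Summable fun j ↦ w j * ‖f j‖ ^ 2) (hg : Summable fun j ↦ w j * ‖g j‖ ^ 2) :
    Summable fun x : G × G ↦ w x.1 * ‖f x.1‖ ^ 2 * (w x.2 * ‖g x.2‖ ^ 2) :=
  hf.mul_of_nonneg hg (hw.mul_norm_sq_nonneg f) (hw.mul_norm_sq_nonneg g)

theorem summable_mul_norm_sq_mul_sub (hw : IsConvolutionWeight w K)
    (hf : Summable fun j ↦ w j * ‖f j‖ ^ 2) (hg : Summable fun j ↦ w j * ‖g j‖ ^ 2) (j : G) :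
    Summable fun i ↦ w i * ‖f i‖ ^ 2 * (w (j - i) * ‖g (j - i)‖ ^ 2) :=
  (hasSum_prod_mul_sub hf hg (hw.summable_prod_mul_norm_sq hf hg)).summable.prod_factor j

theorem norm_mul_norm_sub_sq_eq (hw : IsConvolutionWeight w K) (f : G → E) (g : G → F) (i j : G) :
    (‖f i‖ * ‖g (j - i)‖) ^ 2 =
      (w i)⁻¹ * (w (j - i))⁻¹ * (w i * ‖f i‖ ^ 2 * (w (j - i) * ‖g (j - i)‖ ^ 2)) := by
  have hi := (hw.pos i).ne'
  have hji := (hw.pos (j - i)).ne'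
  field_simp

theorem summable_norm_mul_norm_sub (hw : IsConvolutionWeight w K)
    (hf : Summable fun j ↦ w j * ‖f j‖ ^ 2) (hg : Summable fun j ↦ w j * ‖g j‖ ^ 2) (j : G) :
    Summable fun i ↦ ‖f i‖ * ‖g (j - i)‖ :=
  summable_of_sq_le_mul (fun _ ↦ by positivity)
    (fun i ↦ hw.inv_mul_inv_nonneg i (j - i))
    (fun i ↦ mul_nonneg (hw.mul_norm_sq_nonneg f i) (hw.mul_norm_sq_nonneg g (j - i)))
    (fun i ↦ (hw.norm_mul_norm_sub_sq_eq f g i j).le)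
    (hw.summable_inv_mul_inv_sub j) (hw.summable_mul_norm_sq_mul_sub hf hg j)

theorem mul_tsum_norm_mul_norm_sub_sq_le (hw : IsConvolutionWeight w K)
    (hf : Summable fun j ↦ w j * ‖f j‖ ^ 2) (hg : Summable fun j ↦ w j * ‖g j‖ ^ 2) (j : G) :
    w j * (∑' i, ‖f i‖ * ‖g (j - i)‖) ^ 2 ≤
      2 * K * (∑' i, (w i)⁻¹) *
        ∑' i, w i * ‖f i‖ ^ 2 * (w (j - i) * ‖g (j - i)‖ ^ 2) := by
  have hterm (i : G) : 0 ≤ w i * ‖f i‖ ^ 2 * (w (j - i) * ‖g (j - i)‖ ^ 2) :=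
    mul_nonneg (hw.mul_norm_sq_nonneg f i) (hw.mul_norm_sq_nonneg g (j - i))
  have hj := hw.pos j
  calc w j * (∑' i, ‖f i‖ * ‖g (j - i)‖) ^ 2
      ≤ w j * ((∑' i, (w i)⁻¹ * (w (j - i))⁻¹) *
          ∑' i, w i * ‖f i‖ ^ 2 * (w (j - i) * ‖g (j - i)‖ ^ 2)) := by
        gcongr
        exact tsum_sq_le_tsum_mul_tsum_of_sq_le_mul (fun _ ↦ by positivity)
          (fun i ↦ hw.inv_mul_inv_nonneg i (j - i)) hterm
          (fun i ↦ (hw.norm_mul_norm_sub_sq_eq f g i j).le)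
          (hw.summable_inv_mul_inv_sub j) (hw.summable_mul_norm_sq_mul_sub hf hg j)
    _ = (w j * ∑' i, (w i)⁻¹ * (w (j - i))⁻¹) *
          ∑' i, w i * ‖f i‖ ^ 2 * (w (j - i) * ‖g (j - i)‖ ^ 2) := (mul_assoc _ _ _).symm
    _ ≤ 2 * K * (∑' i, (w i)⁻¹) *
          ∑' i, w i * ‖f i‖ ^ 2 * (w (j - i) * ‖g (j - i)‖ ^ 2) :=
        mul_le_mul_of_nonneg_right (hw.mul_tsum_inv_mul_inv_sub_le j) (tsum_nonneg hterm)

end Norm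

section Ring

variable {A : Type*} [NonUnitalNormedRing A] {f g : G → A}

theorem mul_norm_tsum_mul_sub_sq_le (hw : IsConvolutionWeight w K)
    (hf : Summable fun j ↦ w j * ‖f j‖ ^ 2) (hg : Summable fun j ↦ w j * ‖g j‖ ^ 2) (j : G) :
    w j * ‖∑' i, f i * g (j - i)‖ ^ 2 ≤
      2 * K * (∑' i, (w i)⁻¹) *
        ∑' i, w i * ‖f i‖ ^ 2 * (w (j - i) * ‖g (j - i)‖ ^ 2) := by
  have hj := hw.pos j
  have hnorm : ‖∑' i, f i * g (j - i)‖ ≤ ∑' i, ‖f i‖ * ‖g (j - i)‖ :=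
    tsum_of_norm_bounded (hw.summable_norm_mul_norm_sub hf hg j).hasSum fun i ↦ norm_mul_le _ _
  refine le_trans ?_ (hw.mul_tsum_norm_mul_norm_sub_sq_le hf hg j)
  gcongr

theorem hasSum_tsum_mul_norm_sq_mul_sub (hw : IsConvolutionWeight w K)
    (hf : Summable fun j ↦ w j * ‖f j‖ ^ 2) (hg : Summable fun j ↦ w j * ‖g j‖ ^ 2) :
    HasSum (fun j ↦ ∑' i, w i * ‖f i‖ ^ 2 * (w (j - i) * ‖g (j - i)‖ ^ 2))
      ((∑' j, w j * ‖f j‖ ^ 2) * ∑' j, w j * ‖g j‖ ^ 2) :=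
  hasSum_tsum_mul_sub (v := fun j ↦ w j * ‖g j‖ ^ 2) hf hg (hw.summable_prod_mul_norm_sq hf hg)
    (hw.summable_mul_norm_sq_mul_sub hf hg)

theorem summable_mul_norm_tsum_mul_sub_sq (hw : IsConvolutionWeight w K)
    (hf : Summable fun j ↦ w j * ‖f j‖ ^ 2) (hg : Summable fun j ↦ w j * ‖g j‖ ^ 2) :
    Summable fun j ↦ w j * ‖∑' i, f i * g (j - i)‖ ^ 2 :=
  .of_nonneg_of_le (hw.mul_norm_sq_nonneg _) (hw.mul_norm_tsum_mul_sub_sq_le hf hg)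
    ((hw.hasSum_tsum_mul_norm_sq_mul_sub hf hg).summable.mul_left _)

theorem tsum_mul_norm_tsum_mul_sub_sq_le (hw : IsConvolutionWeight w K)
    (hf : Summable fun j ↦ w j * ‖f j‖ ^ 2) (hg : Summable fun j ↦ w j * ‖g j‖ ^ 2) :
    ∑' j, w j * ‖∑' i, f i * g (j - i)‖ ^ 2 ≤
      2 * K * (∑' i, (w i)⁻¹) * ((∑' j, w j * ‖f j‖ ^ 2) * ∑' j, w j * ‖g j‖ ^ 2) :=
  hasSum_le (hw.mul_norm_tsum_mul_sub_sq_le hf hg)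
    (hw.summable_mul_norm_tsum_mul_sub_sq hf hg).hasSum
    ((hw.hasSum_tsum_mul_norm_sq_mul_sub hf hg).mul_left _)

end Ring

end IsConvolutionWeight

section Weight

variable {s : ℝ}

theorem tsum_natCast_add_rpow_neg_le {N : ℕ} (hN : 0 < N) (hs : 1 < s) :
    ∑' n : ℕ, ((n + N + 1 : ℕ) : ℝ) ^ (-s) ≤ (N : ℝ) ^ (1 - s) / (s - 1) := by
  have hN' : (0 : ℝ) < N := mod_cast hN
  have hanti : AntitoneOn (fun x : ℝ ↦ x ^ (-s)) (Set.Ici (N : ℝ)) := fun x hx y _ hxy ↦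
    Real.rpow_le_rpow_of_nonpos (hN'.trans_le hx) hxy (by linarith)
  calc ∑' n : ℕ, ((n + N + 1 : ℕ) : ℝ) ^ (-s) ≤ ∫ x in Set.Ioi (N : ℝ), x ^ (-s) :=
        hanti.tsum_comp_add_le_integral N (integrableOn_Ioi_rpow_of_lt (by linarith) hN')
          fun x hx ↦ Real.rpow_nonneg (hN'.trans hx).le _
    _ = (N : ℝ) ^ (1 - s) / (s - 1) := by
        rw [integral_Ioi_rpow_of_lt (by linarith) hN', neg_add_eq_sub, ← neg_sub s 1,
          neg_div_neg_eq]

theorem two_le_jml (j : ℤ) : 2 ≤ jml j := le_max_right _ _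

theorem jml_pos (j : ℤ) : 0 < jml j := two_pos.trans_le (two_le_jml j)

theorem jml_neg (j : ℤ) : jml (-j) = jml j := by simp [jml]

theorem jml_eq_two {j : ℤ} (hj : |j| ≤ 2) : jml j = 2 := max_eq_right (mod_cast hj)

theorem jml_natCast {n : ℕ} (hn : 2 ≤ n) : jml n = n := by
  simpa [jml] using hn

theorem jml_add_le (i j : ℤ) : jml (i + j) ≤ jml i + jml j := by
  have htri : |((i + j : ℤ) : ℝ)| ≤ jml i + jml j := by
    push_cast
    exact (abs_add_le _ _).trans (add_le_add (le_max_left _ _) (le_max_left _ _))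
  exact max_le htri (by linarith [two_le_jml i, two_le_jml j])

theorem jml_rpow_add_le (hs : 1 ≤ s) (i j : ℤ) :
    jml (i + j) ^ s ≤ 2 ^ (s - 1) * (jml i ^ s + jml j ^ s) := by
  refine (Real.rpow_le_rpow (jml_pos _).le (jml_add_le i j) (zero_le_one.trans hs)).trans ?_
  exact_mod_cast NNReal.rpow_add_le_mul_rpow_add_rpow ⟨jml i, (jml_pos i).le⟩
    ⟨jml j, (jml_pos j).le⟩ hs

theorem hasSum_jml_natCast_add_one_rpow_neg (hs : 1 < s) :
    HasSum (fun n : ℕ ↦ jml (n + 1) ^ (-s))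
      (2 * 2 ^ (-s) + ∑' n : ℕ, ((n + 2 + 1 : ℕ) : ℝ) ^ (-s)) := by
  have htail : Summable fun n : ℕ ↦ ((n + 2 + 1 : ℕ) : ℝ) ^ (-s) :=
    (summable_nat_add_iff (f := fun n : ℕ ↦ (n : ℝ) ^ (-s)) 3).2
      (Real.summable_nat_rpow.2 (by linarith))
  have hjml (n : ℕ) : jml ((n + 2 : ℕ) + 1) = (n + 2 + 1 : ℕ) := jml_natCast (by lia)
  have hshift : HasSum (fun n : ℕ ↦ jml ((n + 2 : ℕ) + 1) ^ (-s))
      (∑' n : ℕ, ((n + 2 + 1 : ℕ) : ℝ) ^ (-s)) := by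
    simpa only [hjml] using htail.hasSum
  have hhead : ∑ n ∈ Finset.range 2, jml (n + 1) ^ (-s) = 2 * 2 ^ (-s) := by
    simp [Finset.sum_range_succ, jml_eq_two, two_mul]
  rw [add_comm, ← hhead]
  exact (hasSum_nat_add_iff (f := fun n : ℕ ↦ jml (n + 1) ^ (-s)) 2).1 hshift

theorem hasSum_jml_rpow_neg (hs : 1 < s) :
    HasSum (fun j : ℤ ↦ jml j ^ (-s))
      (5 * 2 ^ (-s) + 2 * ∑' n : ℕ, ((n + 2 + 1 : ℕ) : ℝ) ^ (-s)) := by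
  have hpos := hasSum_jml_natCast_add_one_rpow_neg hs
  convert HasSum.of_add_one_of_neg_add_one (f := fun j : ℤ ↦ jml j ^ (-s)) hpos
    (by simpa only [jml_neg] using hpos) using 1
  rw [jml_eq_two (by simp)]
  ring

theorem tsum_jml_rpow_neg_le (hs : 1 < s) :
    ∑' j : ℤ, jml j ^ (-s) ≤ 2 ^ (-s) * (5 + 4 / (s - 1)) := by
  have htail := tsum_natCast_add_rpow_neg_le two_pos hs
  have hpow : (2 : ℝ) ^ (1 - s) = 2 * 2 ^ (-s) := by
    rw [sub_eq_add_neg, Real.rpow_one_add' two_pos.le (by linarith)]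
  calc ∑' j : ℤ, jml j ^ (-s)
      = 5 * 2 ^ (-s) + 2 * ∑' n : ℕ, ((n + 2 + 1 : ℕ) : ℝ) ^ (-s) :=
        (hasSum_jml_rpow_neg hs).tsum_eq
    _ ≤ 5 * 2 ^ (-s) + 2 * (2 ^ (1 - s) / (s - 1)) := by gcongr; exact_mod_cast htail
    _ = 2 ^ (-s) * (5 + 4 / (s - 1)) := by rw [hpow]; ring

theorem isConvolutionWeight_jml_rpow (hs : 1 < s) :
    IsConvolutionWeight (fun j ↦ jml j ^ s) (2 ^ (s - 1)) where
  pos j := Real.rpow_pos_of_pos (jml_pos j) s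
  add_le := jml_rpow_add_le hs.le
  summable_inv := by
    simpa only [Real.rpow_neg (jml_pos _).le] using (hasSum_jml_rpow_neg hs).summable

theorem two_mul_two_rpow_mul_tsum_inv_jml_rpow_le (hs : 1 < s) :
    2 * 2 ^ (s - 1) * ∑' j : ℤ, (jml j ^ s)⁻¹ ≤ 5 + 4 / (s - 1) := by
  have htwo : (2 : ℝ) * 2 ^ (s - 1) = 2 ^ s := by
    rw [Real.rpow_sub_one two_ne_zero, mul_div_cancel₀ _ two_ne_zero]
  have hsum := tsum_jml_rpow_neg_le hs
  simp only [Real.rpow_neg (jml_pos _).le, Real.rpow_neg two_pos.le] at hsum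
  rwa [htwo, ← le_inv_mul_iff₀ (by positivity)]

end Weight

theorem five_add_four_div_le {p : ℝ} (hp : 1 / 2 < p) :
    5 + 4 / (2 * p - 1) ≤ 4 + 2 * (2 * p + 1) / (2 * p - 1) := by
  have hp' : 2 * p - 1 ≠ 0 := by linarith
  have h : 4 + 2 * (2 * p + 1) / (2 * p - 1) = 6 + 4 / (2 * p - 1) := by
    field_simp
    ring
  linarith

theorem convolution_modified_sobolev_norm_bound_general
    {A : Type*} [NonUnitalNormedRing A] [CompleteSpace A]
    (p : ℝ) (hp : 1 / 2 < p) (f g : ℤ → A)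
    (hf : Summable fun j : ℤ => jml j ^ (2 * p) * ‖f j‖ ^ 2)
    (hg : Summable fun j : ℤ => jml j ^ (2 * p) * ‖g j‖ ^ 2) :
    (∀ j : ℤ, Summable fun i : ℤ => ‖f i‖ * ‖g (j - i)‖) ∧
    (∀ j : ℤ, Summable fun i : ℤ => f i * g (j - i)) ∧
    (Summable fun j : ℤ => jml j ^ (2 * p) * ‖∑' i : ℤ, f i * g (j - i)‖ ^ 2) ∧
    √(∑' j : ℤ, jml j ^ (2 * p) * ‖∑' i : ℤ, f i * g (j - i)‖ ^ 2) ≤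
      √(5 + 4 / (2 * p - 1)) *
        √(∑' j : ℤ, jml j ^ (2 * p) * ‖f j‖ ^ 2) *
        √(∑' j : ℤ, jml j ^ (2 * p) * ‖g j‖ ^ 2) := by
  have hs : 1 < 2 * p := by linarith
  have hw := isConvolutionWeight_jml_rpow hs
  have habs := hw.summable_norm_mul_norm_sub hf hg
  have hnonneg (h : ℤ → A) : 0 ≤ ∑' j : ℤ, jml j ^ (2 * p) * ‖h j‖ ^ 2 :=
    tsum_nonneg (hw.mul_norm_sq_nonneg h)
  have hconst : 0 ≤ 5 + 4 / (2 * p - 1) := by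
    have : 0 < 2 * p - 1 := by linarith
    positivity
  refine ⟨habs, fun j ↦ .of_norm_bounded (habs j) fun i ↦ norm_mul_le _ _,
    hw.summable_mul_norm_tsum_mul_sub_sq hf hg, ?_⟩
  rw [← Real.sqrt_mul hconst, ← Real.sqrt_mul (mul_nonneg hconst (hnonneg f)), mul_assoc]
  refine Real.sqrt_le_sqrt ((hw.tsum_mul_norm_tsum_mul_sub_sq_le hf hg).trans ?_)
  exact mul_le_mul_of_nonneg_right (two_mul_two_rpow_mul_tsum_inv_jml_rpow_le hs)
    (mul_nonneg (hnonneg f) (hnonneg g))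

/-- For `p > 1/2`, the convolution of two sequences with finite modified
Sobolev norm `‖f‖_p² = ∑_j ⌈j⌉^{2p}|f_j|²` is well defined (absolutely convergent) and
satisfies `‖f⋆g‖_p ≤ √(4 + 2(2p+1)/(2p−1))·‖f‖_p·‖g‖_p`. -/
theorem convolution_modified_sobolev_norm_bound
    (p : ℝ) (hp : 1 / 2 < p) (f g : ℤ → ℂ)
    (hf : Summable fun j : ℤ => jml j ^ (2 * p) * ‖f j‖ ^ 2)
    (hg : Summable fun j : ℤ => jml j ^ (2 * p) * ‖g j‖ ^ 2) :
    (∀ j : ℤ, Summable fun i : ℤ => ‖f i‖ * ‖g (j - i)‖) ∧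
    (Summable fun j : ℤ => jml j ^ (2 * p) * ‖∑' i : ℤ, f i * g (j - i)‖ ^ 2) ∧
    Real.sqrt (∑' j : ℤ, jml j ^ (2 * p) * ‖∑' i : ℤ, f i * g (j - i)‖ ^ 2) ≤
      Real.sqrt (4 + 2 * (2 * p + 1) / (2 * p - 1)) *
        Real.sqrt (∑' j : ℤ, jml j ^ (2 * p) * ‖f j‖ ^ 2) *
        Real.sqrt (∑' j : ℤ, jml j ^ (2 * p) * ‖g j‖ ^ 2) := by
  obtain ⟨habs, -, hsum, hle⟩ := convolution_modified_sobolev_norm_bound_general p hp f g hf hg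
  exact ⟨habs, hsum, hle.trans <| by gcongr √?_ * _ * _; exact five_add_four_div_le hp⟩
end

section
/- Let 0 < θ < 1 and set C* := 13/(1−θ). With the notation of the context, assume |∑_{i∈ℤ} (α_i − β_i) i²| ≤ 10 ∑_{i∈ℤ} |α_i − β_i|. Then for every j ∈ ℤ with α_j + β_j ≥ 1 one has ∑_{i∈ℤ} |α_i − β_i| ⟨i⟩^{θ/2} ≤ C* · (∑_{i∈ℤ} (α_i + β_i) ⟨i⟩^θ − 2⟨j⟩^θ + |π|). -/
open scoped BigOperators

/-- `⟨j⟩ := max(|j|,1)` as a real number. -/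
noncomputable def jap (j : ℤ) : ℝ := max (|(j : ℝ)|) 1

/-!
Only the uncancelled excess `|α - β|` matters, regarded as a multiset of signed particles in which
particles at the same site carry the same sign. Fix a particle `j`, let `q` be a largest one among
the others, and let `R` be the rest.

Conservation of momentum gives `⟨j⟩ ≤ ⟨q⟩ + ∑_R ⟨i⟩ + |π|`, so concavity of `x ↦ x ^ θ` costs only
a factor `θ` on the rest: `⟨j⟩^θ ≤ ⟨q⟩^θ + θ (∑_R ⟨i⟩^θ + |π|)`.

Near-conservation of energy gives `⟨j⟩, ⟨q⟩ ≤ C (∑_R ⟨i⟩² + |π|)`, because `|±j² ± q²| ≥ |j|` unless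
the two squares cancel; they cancel only for opposite charges at `q = -j`, and then the momentum
`±2j` of the pair gives the bound. Taking the power `θ / 2` and adding up bounds the weight.

If `j` lies outside the excess, the at least two cancelling copies of `j` pay for `2⟨j⟩^θ`.
-/

section RealPowers

variable {θ : ℝ}

lemma rpow_multiset_sum_le_sum_map_rpow (hθ0 : 0 < θ) (hθ1 : θ ≤ 1) {s : Multiset ℝ}
    (hs : ∀ c ∈ s, 0 ≤ c) : s.sum ^ θ ≤ (s.map (· ^ θ)).sum :=
  Multiset.le_sum_of_subadditive_on_pred (· ^ θ) (0 ≤ ·) (Real.zero_rpow hθ0.ne').le le_rfl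
    (fun _ _ ha hb => Real.rpow_add_le_add_rpow ha hb hθ0.le hθ1) (fun _ _ => add_nonneg) s hs

lemma abs_intCast_rpow_le (hθ0 : 0 < θ) (hθ1 : θ ≤ 1) (m : ℤ) : |(m : ℝ)| ^ θ ≤ |(m : ℝ)| := by
  rcases eq_or_ne m 0 with rfl | hm
  · simp [Real.zero_rpow hθ0.ne']
  · exact Real.rpow_le_self_of_one_le (mod_cast Int.one_le_abs hm) hθ1

lemma add_rpow_le_rpow_add_mul (hθ0 : 0 ≤ θ) (hθ1 : θ ≤ 1) {x y : ℝ} (hx : 0 < x) (hy : 0 ≤ y) :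
    (x + y) ^ θ ≤ x ^ θ + θ * (y * x ^ (θ - 1)) := by
  have hyx : 0 ≤ y / x := by positivity
  calc (x + y) ^ θ = x ^ θ * (1 + y / x) ^ θ := by
        rw [← Real.mul_rpow hx.le (by linarith), mul_add, mul_one, mul_div_cancel₀ y hx.ne']
    _ ≤ x ^ θ * (1 + θ * (y / x)) := by
        gcongr
        exact rpow_one_add_le_one_add_mul_self (by linarith) hθ0 hθ1
    _ = x ^ θ + θ * (y * x ^ (θ - 1)) := by rw [Real.rpow_sub_one hx.ne']; ring

lemma rpow_le_rpow_add_mul_of_le_add_sum (hθ0 : 0 ≤ θ) (hθ1 : θ ≤ 1) {a b m : ℝ} {s : Multiset ℝ}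
    (ha : 0 ≤ a) (hb : 1 ≤ b) (hm : 0 ≤ m) (hs : ∀ c ∈ s, 0 < c ∧ c ≤ b)
    (hab : a ≤ b + (s.sum + m)) :
    a ^ θ ≤ b ^ θ + θ * ((s.map (· ^ θ)).sum + m) := by
  have hsum : 0 ≤ s.sum := Multiset.sum_nonneg fun c hc => (hs c hc).1.le
  have hsum_le : s.sum * b ^ (θ - 1) ≤ (s.map (· ^ θ)).sum := by
    rw [← Multiset.map_id' s, ← Multiset.sum_map_mul_right, Multiset.map_id' s]
    refine Multiset.sum_map_le_sum_map _ _ fun c hc => ?_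
    obtain ⟨hc0, hcb⟩ := hs c hc
    calc c * b ^ (θ - 1) ≤ c * c ^ (θ - 1) :=
          mul_le_mul_of_nonneg_left
            (Real.rpow_le_rpow_of_nonpos hc0 hcb (sub_nonpos.2 hθ1)) hc0.le
      _ = c ^ θ := by rw [Real.rpow_sub_one hc0.ne', mul_div_cancel₀ _ hc0.ne']
  have hm_le : m * b ^ (θ - 1) ≤ m :=
    mul_le_of_le_one_right hm (Real.rpow_le_one_of_one_le_of_nonpos hb (by linarith))
  calc a ^ θ ≤ (b + (s.sum + m)) ^ θ := by gcongr
    _ ≤ b ^ θ + θ * ((s.sum + m) * b ^ (θ - 1)) :=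
        add_rpow_le_rpow_add_mul hθ0 hθ1 (by linarith) (by linarith)
    _ ≤ b ^ θ + θ * ((s.map (· ^ θ)).sum + m) := by
        rw [add_mul]
        gcongr

end RealPowers

section Jap

lemma one_le_jap (i : ℤ) : 1 ≤ jap i := le_max_right _ _

lemma abs_le_jap (i : ℤ) : |(i : ℝ)| ≤ jap i := le_max_left _ _

lemma jap_pos (i : ℤ) : 0 < jap i := zero_lt_one.trans_le (one_le_jap i)

lemma jap_rpow_nonneg (i : ℤ) (r : ℝ) : 0 ≤ jap i ^ r := Real.rpow_nonneg (jap_pos i).le r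

lemma jap_rpow_le_jap_rpow (i : ℤ) {r t : ℝ} (hrt : r ≤ t) : jap i ^ r ≤ jap i ^ t :=
  Real.rpow_le_rpow_of_exponent_le (one_le_jap i) hrt

lemma rpow_half_abs_add_sum_sq_le {θ : ℝ} (hθ0 : 0 < θ) (hθ2 : θ ≤ 2) (m : ℤ) (R : Multiset ℤ) :
    (|(m : ℝ)| + (R.map (jap · ^ 2)).sum) ^ (θ / 2) ≤
      |(m : ℝ)| + (R.map (jap · ^ θ)).sum := by
  have hsq : ∀ c ∈ R.map (jap · ^ 2), 0 ≤ c := by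
    simp only [Multiset.mem_map]
    rintro _ ⟨i, -, rfl⟩
    exact sq_nonneg _
  have hhalf : ∀ i, (jap i ^ 2) ^ (θ / 2) = jap i ^ θ := fun i => by
    rw [← Real.rpow_two, ← Real.rpow_mul (jap_pos i).le, mul_div_cancel₀ θ two_ne_zero]
  calc (|(m : ℝ)| + (R.map (jap · ^ 2)).sum) ^ (θ / 2)
      ≤ |(m : ℝ)| ^ (θ / 2) + (R.map (jap · ^ 2)).sum ^ (θ / 2) :=
        Real.rpow_add_le_add_rpow (abs_nonneg _) (Multiset.sum_nonneg hsq)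
          (by linarith) (by linarith)
    _ ≤ |(m : ℝ)| + ((R.map (jap · ^ 2)).map (· ^ (θ / 2))).sum :=
        add_le_add (abs_intCast_rpow_le (by linarith) (by linarith) m)
          (rpow_multiset_sum_le_sum_map_rpow (by linarith) (by linarith) hsq)
    _ = |(m : ℝ)| + (R.map (jap · ^ θ)).sum := by
        simp only [Multiset.map_map, Function.comp_def, hhalf]

end Jap

section IntSquares

variable {p q : ℤ}

lemma abs_units_val_mul (u : ℤˣ) (z : ℤ) : |u * z| = |z| := by
  rw [abs_mul, Int.isUnit_iff_abs_eq.1 u.isUnit, one_mul]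

lemma abs_le_abs_sq_sub_sq (h : |p| ≠ |q|) : |p| ≤ |p ^ 2 - q ^ 2| := by
  have hgap : 1 ≤ |(|p| - |q|)| := Int.one_le_abs (sub_ne_zero.2 h)
  have hp := abs_nonneg p
  have hq := abs_nonneg q
  calc |p| ≤ (|p| + |q|) * |(|p| - |q|)| := by nlinarith
    _ = |p ^ 2 - q ^ 2| := by
      rw [← sq_abs p, ← sq_abs q, sq_sub_sq, abs_mul, abs_of_nonneg (add_nonneg hp hq)]

lemma abs_le_abs_units_mul_sq_add (ε δ : ℤˣ) (h : ε = δ ∨ |p| ≠ |q|) :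
    |p| ≤ |ε * p ^ 2 + δ * q ^ 2| := by
  by_cases hεδ : ε = δ
  · rw [hεδ, ← mul_add, abs_units_val_mul, ← sq_abs p]
    linarith [Int.le_self_sq |p|, sq_nonneg q, le_abs_self (|p| ^ 2 + q ^ 2)]
  · have hδ : δ = -ε := by rw [Int.units_ne_iff_eq_neg.1 hεδ, neg_neg]
    rw [hδ, Units.val_neg, neg_mul, ← sub_eq_add_neg, ← mul_sub, abs_units_val_mul]
    exact abs_le_abs_sq_sub_sq (h.resolve_left hεδ)

end IntSquares

section SignedMoment

/-- The `n`-th moment of a multiset of charged particles on `ℤ`, a particle at site `i` carrying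
charge `e i`. The moments of order `0`, `1`, `2` are the total charge, the momentum and the energy.
Letting the charge depend on the site only encodes that no two particles cancel each other. -/
def signedMoment (e : ℤ → ℤˣ) (T : Multiset ℤ) (n : ℕ) : ℤ :=
  (T.map fun i => (e i : ℤ) * i ^ n).sum

variable {e : ℤ → ℤˣ} {R : Multiset ℤ} {p q : ℤ}

@[simp]
lemma signedMoment_zero_left (e : ℤ → ℤˣ) (n : ℕ) : signedMoment e 0 n = 0 := rfl

@[simp]
lemma signedMoment_cons (e : ℤ → ℤˣ) (p : ℤ) (T : Multiset ℤ) (n : ℕ) :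
    signedMoment e (p ::ₘ T) n = e p * p ^ n + signedMoment e T n := by
  simp [signedMoment]

lemma abs_signedMoment_le (e : ℤ → ℤˣ) (T : Multiset ℤ) (n : ℕ) :
    |(signedMoment e T n : ℝ)| ≤ (T.map (jap · ^ n)).sum := by
  have hterm (i : ℤ) : |((e i : ℤ) : ℝ) * (i : ℝ) ^ n| ≤ jap i ^ n := by
    have hcharge : |((e i : ℤ) : ℝ) * (i : ℝ) ^ n| = |(i : ℝ)| ^ n := by
      rw [← abs_pow]
      exact_mod_cast abs_units_val_mul (e i) (i ^ n)
    rw [hcharge]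
    exact pow_le_pow_left₀ (abs_nonneg _) (abs_le_jap i) n
  induction T using Multiset.induction_on with
  | empty => simp
  | cons i T ih =>
    rw [signedMoment_cons, Multiset.map_cons, Multiset.sum_cons]
    push_cast
    exact (abs_add_le _ _).trans (add_le_add (hterm i) ih)

lemma card_le_sum_jap_pow (T : Multiset ℤ) (n : ℕ) :
    (T.card : ℝ) ≤ (T.map (jap · ^ n)).sum := by
  simpa using Multiset.card_nsmul_le_sum (s := T.map (jap · ^ n)) (a := 1) (by
    simp only [Multiset.mem_map]
    rintro _ ⟨i, -, rfl⟩
    exact one_le_pow₀ (one_le_jap i))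

lemma jap_le_jap_add_sum_add_abs_momentum (e : ℤ → ℤˣ) (p q : ℤ) (R : Multiset ℤ) :
    jap p ≤ jap q + ((R.map jap).sum + |(signedMoment e (p ::ₘ q ::ₘ R) 1 : ℝ)|) := by
  have hrest : |(signedMoment e (q ::ₘ R) 1 : ℝ)| ≤ jap q + (R.map jap).sum := by
    simpa using abs_signedMoment_le e (q ::ₘ R) 1
  have hrest0 : 0 ≤ (R.map jap).sum := by
    simpa using (Nat.cast_nonneg _).trans (card_le_sum_jap_pow R 1)
  have hp : |(p : ℝ)| ≤
      |(signedMoment e (p ::ₘ q ::ₘ R) 1 : ℝ)| + |(signedMoment e (q ::ₘ R) 1 : ℝ)| := by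
    have hsplit : e p * p = signedMoment e (p ::ₘ q ::ₘ R) 1 - signedMoment e (q ::ₘ R) 1 := by
      rw [signedMoment_cons e p]; ring
    have := abs_sub (signedMoment e (p ::ₘ q ::ₘ R) 1) (signedMoment e (q ::ₘ R) 1)
    rw [← hsplit, abs_units_val_mul] at this
    exact_mod_cast this
  refine max_le (by linarith) ?_
  linarith [one_le_jap q, abs_nonneg (signedMoment e (p ::ₘ q ::ₘ R) 1 : ℝ)]

lemma one_le_abs_momentum_add_card (h0 : signedMoment e (p ::ₘ q ::ₘ R) 0 = 0) :
    1 ≤ |signedMoment e (p ::ₘ q ::ₘ R) 1| + R.card := by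
  rcases R.empty_or_exists_mem with rfl | ⟨i, hi⟩
  · simp only [signedMoment_cons, signedMoment_zero_left, pow_zero, pow_one, mul_one, add_zero,
      Multiset.card_zero, Nat.cast_zero] at h0 ⊢
    have hq : (e q : ℤ) = -e p := by linarith
    refine Int.one_le_abs fun h1 => ?_
    have hpq : p = q := by
      have hprod : (e p : ℤ) * (p - q) = 0 := by rw [hq] at h1; linarith
      exact sub_eq_zero.1 ((mul_eq_zero.1 hprod).resolve_left (e p).ne_zero)
    subst hpq
    exact (e p).ne_zero (by linarith)
  · have hcard : 0 < R.card := Multiset.card_pos_iff_exists_mem.2 ⟨i, hi⟩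
    have := abs_nonneg (signedMoment e (p ::ₘ q ::ₘ R) 1)
    lia

lemma two_mul_abs_le_of_opposite (e : ℤ → ℤˣ) (R : Multiset ℤ) (he : e p ≠ e (-p)) :
    2 * |(p : ℝ)| ≤ |(signedMoment e (p ::ₘ (-p) ::ₘ R) 1 : ℝ)| + (R.map jap).sum := by
  have hpair : e p * (2 * p) = signedMoment e (p ::ₘ (-p) ::ₘ R) 1 - signedMoment e R 1 := by
    have hneg : (e p : ℤ) = -e (-p) := by rw [Int.units_ne_iff_eq_neg.1 he, Units.val_neg]
    simp only [signedMoment_cons, hneg]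
    ring
  have habs : 2 * |p| ≤ |signedMoment e (p ::ₘ (-p) ::ₘ R) 1| + |signedMoment e R 1| := by
    have := abs_sub (signedMoment e (p ::ₘ (-p) ::ₘ R) 1) (signedMoment e R 1)
    rwa [← hpair, abs_units_val_mul, abs_mul, abs_two] at this
  have habs' : 2 * |(p : ℝ)| ≤
      |(signedMoment e (p ::ₘ (-p) ::ₘ R) 1 : ℝ)| + |(signedMoment e R 1 : ℝ)| := mod_cast habs
  have hrest := abs_signedMoment_le e R 1
  simp only [pow_one] at hrest
  linarith

lemma abs_le_abs_energy_add (e : ℤ → ℤˣ) (R : Multiset ℤ) (h : e p = e q ∨ |p| ≠ |q|) :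
    |(p : ℝ)| ≤ |(signedMoment e (p ::ₘ q ::ₘ R) 2 : ℝ)| + (R.map (jap · ^ 2)).sum := by
  have hpair : (e p * p ^ 2 + e q * q ^ 2 : ℤ) =
      signedMoment e (p ::ₘ q ::ₘ R) 2 - signedMoment e R 2 := by
    simp only [signedMoment_cons]
    ring
  have habs : |(p : ℝ)| ≤
      |(signedMoment e (p ::ₘ q ::ₘ R) 2 : ℝ)| + |(signedMoment e R 2 : ℝ)| := by
    have := abs_le_abs_units_mul_sq_add (e p) (e q) h
    rw [hpair] at this
    exact_mod_cast this.trans (abs_sub _ _)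
  exact habs.trans (by gcongr; exact abs_signedMoment_le e R 2)

lemma jap_le_mul_abs_momentum_add_sum_sq {K : ℝ} (hK : 0 ≤ K)
    (h0 : signedMoment e (p ::ₘ q ::ₘ R) 0 = 0)
    (h2 : |(signedMoment e (p ::ₘ q ::ₘ R) 2 : ℝ)| ≤ K * (p ::ₘ q ::ₘ R).card) :
    jap p ≤
      (3 * K + 1) * (|(signedMoment e (p ::ₘ q ::ₘ R) 1 : ℝ)| + (R.map (jap · ^ 2)).sum) := by
  have hcard := card_le_sum_jap_pow R 2
  have hone : (1 : ℝ) ≤ |(signedMoment e (p ::ₘ q ::ₘ R) 1 : ℝ)| + R.card :=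
    mod_cast one_le_abs_momentum_add_card h0
  have hM := abs_nonneg (signedMoment e (p ::ₘ q ::ₘ R) 1 : ℝ)
  set X := |(signedMoment e (p ::ₘ q ::ₘ R) 1 : ℝ)| + (R.map (jap · ^ 2)).sum
  have hX : 1 ≤ X := by linarith
  have hXle : X ≤ (3 * K + 1) * X := le_mul_of_one_le_left (by linarith) (by linarith)
  refine max_le ?_ (hX.trans hXle)
  by_cases h : e p = e q ∨ |p| ≠ |q|
  · have henergy := abs_le_abs_energy_add e R h
    -- The pair `p`, `q` adds `2 ≤ 2 * X` to `R.card ≤ X`; this is the `3` in the constant.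
    have hcount : K * (p ::ₘ q ::ₘ R).card ≤ K * (3 * X) := by
      gcongr
      push_cast [Multiset.card_cons]
      linarith
    linarith
  · obtain ⟨he, habs⟩ := not_or.1 h
    obtain rfl : q = -p := by
      rcases abs_eq_abs.1 (not_not.1 habs) with rfl | rfl
      · exact absurd rfl he
      · rw [neg_neg]
    have hmomentum := two_mul_abs_le_of_opposite e R he
    have hle_sq : (R.map jap).sum ≤ (R.map (jap · ^ 2)).sum :=
      Multiset.sum_map_le_sum_map _ _ fun i _ => le_self_pow₀ (one_le_jap i) two_ne_zero
    linarith [abs_nonneg (p : ℝ)]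

variable {θ K : ℝ}

lemma jap_rpow_half_le_sqrt_mul (hθ0 : 0 < θ) (hθ1 : θ ≤ 1) (hK : 0 ≤ K)
    (h0 : signedMoment e (p ::ₘ q ::ₘ R) 0 = 0)
    (h2 : |(signedMoment e (p ::ₘ q ::ₘ R) 2 : ℝ)| ≤ K * (p ::ₘ q ::ₘ R).card) :
    jap p ^ (θ / 2) ≤ √(3 * K + 1) *
      (|(signedMoment e (p ::ₘ q ::ₘ R) 1 : ℝ)| + (R.map (jap · ^ θ)).sum) := by
  have hsq : 0 ≤ (R.map (jap · ^ 2)).sum := (Nat.cast_nonneg _).trans (card_le_sum_jap_pow R 2)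
  calc jap p ^ (θ / 2)
      ≤ ((3 * K + 1) *
          (|(signedMoment e (p ::ₘ q ::ₘ R) 1 : ℝ)| + (R.map (jap · ^ 2)).sum)) ^ (θ / 2) :=
        Real.rpow_le_rpow (jap_pos p).le (jap_le_mul_abs_momentum_add_sum_sq hK h0 h2) (by linarith)
    _ = (3 * K + 1) ^ (θ / 2) *
          (|(signedMoment e (p ::ₘ q ::ₘ R) 1 : ℝ)| + (R.map (jap · ^ 2)).sum) ^ (θ / 2) :=
        Real.mul_rpow (by positivity) (by positivity)
    _ ≤ _ := by
        rw [Real.sqrt_eq_rpow]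
        gcongr
        · linarith
        · exact rpow_half_abs_add_sum_sq_le hθ0 (by linarith) _ R

lemma jap_rpow_le_jap_rpow_add_mul (hθ0 : 0 ≤ θ) (hθ1 : θ ≤ 1) (e : ℤ → ℤˣ) (p : ℤ)
    (hmax : ∀ i ∈ R, jap i ≤ jap q) :
    jap p ^ θ ≤ jap q ^ θ +
      θ * ((R.map (jap · ^ θ)).sum + |(signedMoment e (p ::ₘ q ::ₘ R) 1 : ℝ)|) := by
  have hrest : ∀ c ∈ R.map jap, 0 < c ∧ c ≤ jap q := by
    simp only [Multiset.mem_map]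
    rintro _ ⟨i, hi, rfl⟩
    exact ⟨jap_pos i, hmax i hi⟩
  simpa only [Multiset.map_map, Function.comp_def] using
    rpow_le_rpow_add_mul_of_le_add_sum hθ0 hθ1 (jap_pos p).le (one_le_jap q) (abs_nonneg _) hrest
      (jap_le_jap_add_sum_add_abs_momentum e p q R)

lemma exists_eq_cons_cons_of_charge_eq_zero {T : Multiset ℤ} {j : ℤ} (hj : j ∈ T)
    (h0 : signedMoment e T 0 = 0) :
    ∃ q R, T = j ::ₘ q ::ₘ R ∧ ∀ i ∈ R, jap i ≤ jap q := by
  obtain ⟨T', rfl⟩ := Multiset.exists_cons_of_mem hj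
  have hT' : T' ≠ 0 := by
    rintro rfl
    simp [signedMoment] at h0
  obtain ⟨q, hq, hmax⟩ :=
    T'.toFinset.exists_max_image jap (Multiset.toFinset_nonempty.2 hT')
  obtain ⟨R, rfl⟩ := Multiset.exists_cons_of_mem (Multiset.mem_toFinset.1 hq)
  exact ⟨q, R, rfl, fun i hi => hmax i (Multiset.mem_toFinset.2 (Multiset.mem_cons_of_mem hi))⟩

theorem sum_jap_rpow_half_le {T : Multiset ℤ} (hθ0 : 0 < θ) (hθ1 : θ < 1) (hK : 0 ≤ K)
    (h0 : signedMoment e T 0 = 0) (h2 : |(signedMoment e T 2 : ℝ)| ≤ K * T.card)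
    {j : ℤ} (hj : j ∈ T) :
    (T.map (jap · ^ (θ / 2))).sum ≤ (2 * √(3 * K + 1) + 1) / (1 - θ) *
      ((T.map (jap · ^ θ)).sum - 2 * jap j ^ θ + |(signedMoment e T 1 : ℝ)|) := by
  obtain ⟨q, R, rfl, hmax⟩ := exists_eq_cons_cons_of_charge_eq_zero hj h0
  have hconcave := jap_rpow_le_jap_rpow_add_mul hθ0.le hθ1.le e j hmax
  have hj_half := jap_rpow_half_le_sqrt_mul hθ0 hθ1.le hK h0 h2
  have hq_half : jap q ^ (θ / 2) ≤ √(3 * K + 1) *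
      (|(signedMoment e (j ::ₘ q ::ₘ R) 1 : ℝ)| + (R.map (jap · ^ θ)).sum) := by
    rw [Multiset.cons_swap] at h0 h2 ⊢
    exact jap_rpow_half_le_sqrt_mul hθ0 hθ1.le hK h0 h2
  have hR_half : (R.map (jap · ^ (θ / 2))).sum ≤ (R.map (jap · ^ θ)).sum :=
    Multiset.sum_map_le_sum_map _ _ fun i _ => jap_rpow_le_jap_rpow i (by linarith)
  simp only [Multiset.map_cons, Multiset.sum_cons]
  set S := (R.map (jap · ^ θ)).sum
  set M := |(signedMoment e (j ::ₘ q ::ₘ R) 1 : ℝ)|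
  have hM : 0 ≤ M := abs_nonneg _
  calc jap j ^ (θ / 2) + (jap q ^ (θ / 2) + (R.map (jap · ^ (θ / 2))).sum)
      ≤ (2 * √(3 * K + 1) + 1) / (1 - θ) * ((1 - θ) * (S + M)) := by
        rw [← mul_assoc, div_mul_cancel₀ _ (by linarith)]
        linarith
    _ ≤ (2 * √(3 * K + 1) + 1) / (1 - θ) *
          (jap j ^ θ + (jap q ^ θ + S) - 2 * jap j ^ θ + M) := by
        have : 0 < 1 - θ := by linarith
        gcongr
        linarith

end SignedMoment

section Excess

variable {ι : Type*}

/-- The multiset in which `i` occurs `|α i - β i|` times: what is left of `α` and `β` after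
cancelling common elements. One of the two truncated differences vanishes at each site. -/
noncomputable def excess (α β : ι →₀ ℕ) : Multiset ι :=
  Finsupp.toMultiset ((α - β) + (β - α))

/-- The charge of the particles of `excess α β` at `i`: the sign of `α i - β i`, where the
value at sites with `α i = β i` is immaterial. -/
def excessSign (α β : ι →₀ ℕ) (i : ι) : ℤˣ := if β i ≤ α i then 1 else -1

lemma mem_excess {α β : ι →₀ ℕ} {i : ι} : i ∈ excess α β ↔ α i ≠ β i := by
  simp only [excess, Finsupp.mem_toMultiset, Finsupp.mem_support_iff, Finsupp.add_apply,
    Finsupp.tsub_apply]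
  lia

lemma sum_map_excess [DecidableEq ι] (α β : ι →₀ ℕ) (c : ι → ℝ) :
    ((excess α β).map c).sum =
      ∑ i ∈ α.support ∪ β.support, |(α i : ℝ) - (β i : ℝ)| * c i := by
  have hsupp : (excess α β).toFinset ⊆ α.support ∪ β.support := fun i hi => by
    have := mem_excess.1 (Multiset.mem_toFinset.1 hi)
    simp only [Finset.mem_union, Finsupp.mem_support_iff]
    lia
  have hcount (i : ι) : ((excess α β).count i : ℝ) = |(α i : ℝ) - (β i : ℝ)| := by
    have : (excess α β).count i = (α i - β i) + (β i - α i) := by simp [excess]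
    rw [this]
    rcases le_total (α i) (β i) with h | h
    · rw [abs_sub_comm, abs_of_nonneg (sub_nonneg.2 (mod_cast h))]
      simp [h]
    · rw [abs_of_nonneg (sub_nonneg.2 (mod_cast h))]
      simp [h]
  rw [Finset.sum_multiset_map_count]
  simp only [nsmul_eq_mul, hcount]
  refine Finset.sum_subset hsupp fun i _ hi => ?_
  rw [← hcount, Multiset.count_eq_zero.2 (mt Multiset.mem_toFinset.2 hi), Nat.cast_zero, zero_mul]

lemma card_excess [DecidableEq ι] (α β : ι →₀ ℕ) :
    ((excess α β).card : ℝ) = ∑ i ∈ α.support ∪ β.support, |(α i : ℝ) - (β i : ℝ)| := by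
  simpa using sum_map_excess α β fun _ => 1

lemma signedMoment_excess (α β : ℤ →₀ ℕ) (n : ℕ) :
    (signedMoment (excessSign α β) (excess α β) n : ℝ) =
      ∑ i ∈ α.support ∪ β.support, ((α i : ℝ) - (β i : ℝ)) * (i : ℝ) ^ n := by
  have hsign (i : ℤ) :
      |(α i : ℝ) - (β i : ℝ)| * ((excessSign α β i : ℤ) : ℝ) = (α i : ℝ) - (β i : ℝ) := by
    unfold excessSign
    split_ifs with h
    · simp [abs_of_nonneg (sub_nonneg.2 (Nat.cast_le (α := ℝ).2 h))]
    · simp [abs_of_neg (sub_neg.2 (Nat.cast_lt (α := ℝ).2 (not_le.1 h)))]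
  simp only [signedMoment, Int.cast_multiset_sum, Multiset.map_map, Function.comp_def,
    Int.cast_mul, Int.cast_pow, sum_map_excess, ← mul_assoc, hsign]

lemma signedMoment_excess_zero {α β : ℤ →₀ ℕ}
    (hmass : (α.sum fun _ n => n) = β.sum fun _ n => n) :
    signedMoment (excessSign α β) (excess α β) 0 = 0 := by
  have hα := Finsupp.sum_of_support_subset α (s := α.support ∪ β.support)
    Finset.subset_union_left (fun _ n => n) fun _ _ => rfl
  have hβ := Finsupp.sum_of_support_subset β (s := α.support ∪ β.support)
    Finset.subset_union_right (fun _ n => n) fun _ _ => rfl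
  have hsum : (∑ i ∈ α.support ∪ β.support, (α i : ℝ)) = ∑ i ∈ α.support ∪ β.support, (β i : ℝ) :=
    mod_cast hα.symm.trans (hmass.trans hβ)
  have := signedMoment_excess α β 0
  simp only [pow_zero, mul_one, Finset.sum_sub_distrib, hsum, sub_self] at this
  exact_mod_cast this

lemma sum_abs_sub_mul_le_sum_add_mul (s : Finset ι) (a b : ι → ℕ) {c : ι → ℝ}
    (hc : ∀ i, 0 ≤ c i) :
    ∑ i ∈ s, |(a i : ℝ) - (b i : ℝ)| * c i ≤ ∑ i ∈ s, ((a i : ℝ) + (b i : ℝ)) * c i :=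
  Finset.sum_le_sum fun i _ =>
    mul_le_mul_of_nonneg_right (by simpa using abs_sub (a i : ℝ) (b i)) (hc i)

lemma sum_abs_sub_mul_add_le_of_eq {s : Finset ι} {a b : ι → ℕ} {c : ι → ℝ} (hc : ∀ i, 0 ≤ c i)
    {j : ι} (hj : j ∈ s) (hab : a j = b j) (hpos : 1 ≤ a j + b j) :
    ∑ i ∈ s, |(a i : ℝ) - (b i : ℝ)| * c i + 2 * c j ≤
      ∑ i ∈ s, ((a i : ℝ) + (b i : ℝ)) * c i := by
  classical
  have hrest := sum_abs_sub_mul_le_sum_add_mul (s.erase j) a b hc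
  have htwo : (2 : ℝ) ≤ a j + b j := mod_cast (by lia : 2 ≤ a j + b j)
  have hterm := mul_le_mul_of_nonneg_right htwo (hc j)
  rw [← Finset.add_sum_erase s _ hj, ← Finset.add_sum_erase s _ hj, hab, sub_self, abs_zero,
    zero_mul]
  rw [hab] at hterm
  linarith

end Excess

theorem small_divisor_weight_bound_general {θ K : ℝ} (hθ0 : 0 < θ) (hθ1 : θ < 1) (hK : 0 ≤ K)
    {α β : ℤ →₀ ℕ} (hmass : (α.sum fun _ n => n) = β.sum fun _ n => n)
    (hsmall : |∑ i ∈ α.support ∪ β.support, ((α i : ℝ) - (β i : ℝ)) * (i : ℝ) ^ 2| ≤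
      K * ∑ i ∈ α.support ∪ β.support, |(α i : ℝ) - (β i : ℝ)|)
    {j : ℤ} (hj : 1 ≤ α j + β j) :
    ∑ i ∈ α.support ∪ β.support, |(α i : ℝ) - (β i : ℝ)| * jap i ^ (θ / 2) ≤
      ((2 * √(3 * K + 1) + 1) / (1 - θ)) *
        ((∑ i ∈ α.support ∪ β.support, ((α i : ℝ) + (β i : ℝ)) * jap i ^ θ) -
          2 * jap j ^ θ + |∑ i ∈ α.support ∪ β.support, (i : ℝ) * ((α i : ℝ) - (β i : ℝ))|) := by
  have hθ' : 0 < 1 - θ := sub_pos.2 hθ1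
  by_cases hjαβ : α j = β j
  · have hjs : j ∈ α.support ∪ β.support := by
      simp only [Finset.mem_union, Finsupp.mem_support_iff]
      lia
    have hpair := sum_abs_sub_mul_add_le_of_eq (jap_rpow_nonneg · θ) hjs hjαβ hj
    have hhalf : ∑ i ∈ α.support ∪ β.support, |(α i : ℝ) - (β i : ℝ)| * jap i ^ (θ / 2) ≤
        ∑ i ∈ α.support ∪ β.support, |(α i : ℝ) - (β i : ℝ)| * jap i ^ θ :=
      Finset.sum_le_sum fun i _ =>
        mul_le_mul_of_nonneg_left (jap_rpow_le_jap_rpow i (by linarith)) (abs_nonneg _)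
    have hconst : 1 ≤ (2 * √(3 * K + 1) + 1) / (1 - θ) := by
      rw [one_le_div hθ']
      linarith [Real.sqrt_nonneg (3 * K + 1)]
    have hweight : 0 ≤
        ∑ i ∈ α.support ∪ β.support, |(α i : ℝ) - (β i : ℝ)| * jap i ^ (θ / 2) :=
      Finset.sum_nonneg fun i _ => mul_nonneg (abs_nonneg _) (jap_rpow_nonneg i _)
    have hmomentum :=
      abs_nonneg (∑ i ∈ α.support ∪ β.support, (i : ℝ) * ((α i : ℝ) - (β i : ℝ)))
    exact (le_mul_of_one_le_left hweight hconst).trans (by gcongr; linarith)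
  · have henergy : |(signedMoment (excessSign α β) (excess α β) 2 : ℝ)| ≤
        K * (excess α β).card := by rwa [signedMoment_excess, card_excess]
    have hbound := sum_jap_rpow_half_le hθ0 hθ1 hK (signedMoment_excess_zero hmass) henergy
      (mem_excess.2 hjαβ)
    simp only [sum_map_excess, signedMoment_excess, pow_one, mul_comm _ (Int.cast _)] at hbound
    refine hbound.trans ?_
    gcongr ?_ * (?_ - _ + _)
    exact sum_abs_sub_mul_le_sum_add_mul _ α β (jap_rpow_nonneg · θ)

/-- Let `C* := 13/(1−θ)`. If `|∑ (α_i−β_i) i²| ≤ 10 ∑ |α_i−β_i|`, then for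
every `j` with `α_j + β_j ≥ 1`,
`∑_i |α_i−β_i| ⟨i⟩^{θ/2} ≤ C*(∑_i (α_i+β_i)⟨i⟩^θ − 2⟨j⟩^θ + |π|)`. -/
theorem small_divisor_weight_bound
    (θ : ℝ) (hθ0 : 0 < θ) (hθ1 : θ < 1)
    (α β : ℤ →₀ ℕ)
    (hmass : (α.sum fun _ n => n) = β.sum fun _ n => n)
    (hmass1 : 1 ≤ α.sum fun _ n => n)
    (π : ℝ)
    (hπ : π = ∑ i ∈ α.support ∪ β.support, (i : ℝ) * ((α i : ℝ) - (β i : ℝ)))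
    (hsmall : |∑ i ∈ α.support ∪ β.support, ((α i : ℝ) - (β i : ℝ)) * (i : ℝ) ^ 2| ≤
      10 * ∑ i ∈ α.support ∪ β.support, |(α i : ℝ) - (β i : ℝ)|)
    (j : ℤ) (hj : 1 ≤ α j + β j) :
    ∑ i ∈ α.support ∪ β.support, |(α i : ℝ) - (β i : ℝ)| * jap i ^ (θ / 2) ≤
      (13 / (1 - θ)) *
        ((∑ i ∈ α.support ∪ β.support, ((α i : ℝ) + (β i : ℝ)) * jap i ^ θ) -
          2 * jap j ^ θ + |π|) := by
  -- With `K = 35 / 3 ≥ 10` the general constant `2 * √(3 * K + 1) + 1` is exactly `13`.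
  have hsqrt : √(3 * (35 / 3) + 1 : ℝ) = 6 := by
    rw [Real.sqrt_eq_iff_mul_self_eq] <;> norm_num
  have hconst : (13 : ℝ) = 2 * √(3 * (35 / 3) + 1) + 1 := by rw [hsqrt]; norm_num
  rw [hπ, hconst]
  exact small_divisor_weight_bound_general hθ0 hθ1 (by norm_num) hmass
    (hsmall.trans (by gcongr; norm_num)) hj
end
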